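/- arXiv:1510.03237 — 5 statements merged into one kernel-verified Lean document; each statement's English description precedes it below -/
import Mathlib

section
/- Let α and β be real numbers with (10−2√10)/5 < α < 1 and 1−α < β < f(α), where f(α) = min{3−3α, α/2, (3α²+4α−4)/(8(1−α))}. Then m := 2/α satisfies condition (C_m), i.e., 4/(3−α−β) < 2/α < min{4, 1/(1−α)}, (2(2−α)β − 3α + 2)·(2/α) < 4(2−α)β, and (4 + 8β − 4α − 3α²)·(2/α) < 16β. -/
/-- Condition `(C_m)` on the exponent `m`. -/
def CondM (α β m : ℝ) : Prop :=
  4 / (3 - α - β) < m ∧ m < min 4 (1 / (1 - α)) ∧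
    (2 * (2 - α) * β - 3 * α + 2) * m < 4 * (2 - α) * β ∧
    (4 + 8 * β - 4 * α - 3 * α ^ 2) * m < 16 * β

/-- under the hypotheses of the main theorem, `m = 2/α` satisfies `(C_m)`. -/
theorem two_div_alpha_satisfies_CondM (α β : ℝ)
    (hα0 : (10 - 2 * Real.sqrt 10) / 5 < α) (hα1 : α < 1)
    (hβ0 : 1 - α < β)
    (hβ1 : β < min (3 - 3 * α) (min (α / 2) ((3 * α ^ 2 + 4 * α - 4) / (8 * (1 - α))))) :
    CondM α β (2 / α) := by
  rw [lt_min_iff, lt_min_iff] at hβ1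
  obtain ⟨h1, h2, h3⟩ := hβ1
  have h23 : 0 < 3 * α - 2 := by linarith
  have hα : 0 < α := by linarith
  have h1α : 0 < 1 - α := by linarith
  rw [lt_div_iff₀ (by linarith)] at h3
  refine ⟨?_, ?_, ?_, ?_⟩
  · rw [div_lt_div_iff₀ (by linarith) hα]
    linarith
  · rw [lt_min_iff]
    constructor
    · rw [div_lt_iff₀ hα]
      linarith
    · rw [div_lt_div_iff₀ hα h1α]
      linarith
  · rw [← mul_div_assoc, div_lt_iff₀ hα]
    have h4 := mul_lt_mul_of_pos_left h3 (show 0 < 2 - α by linarith)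
    have h5 : 0 < α ^ 2 * (3 * α - 2) := by positivity
    nlinarith
  · rw [← mul_div_assoc, div_lt_iff₀ hα]
    nlinarith
end

section
/- Let α and β be real numbers with (10−2√10)/5 < α < 1 and 1−α < β < f(α), where f(α) = min{3−3α, α/2, (3α²+4α−4)/(8(1−α))}. Then there exists a real number m with m > 2/α satisfying condition (C_m). -/
/-- under the hypotheses of the main theorem there exists `m > 2/α`
satisfying condition `(C_m)`. -/
theorem exists_m_gt_two_div_alpha_CondM (α β : ℝ)
    (hα0 : (10 - 2 * Real.sqrt 10) / 5 < α) (hα1 : α < 1)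
    (hβ0 : 1 - α < β)
    (hβ1 : β < min (3 - 3 * α) (min (α / 2) ((3 * α ^ 2 + 4 * α - 4) / (8 * (1 - α))))) :
    ∃ m : ℝ, 2 / α < m ∧ CondM α β m := by
  have hs : Real.sqrt 10 < 3.2 := by
    rw [Real.sqrt_lt' (by norm_num)]; norm_num
  have ha : 0.72 < α := by linarith
  obtain ⟨-, hβ1⟩ := lt_min_iff.1 hβ1
  obtain ⟨hb2, hb3⟩ := lt_min_iff.1 hβ1
  rw [lt_div_iff₀ (by linarith)] at hb3
  have hD : 0 < 3 - α - β := by linarith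
  have key : ∃ M : ℝ, 2 / α ≤ M ∧ 4 / (3 - α - β) ≤ M ∧ M < 4 ∧ M < 1 / (1 - α) ∧
      (2 * (2 - α) * β - 3 * α + 2) * M < 4 * (2 - α) * β ∧
      (4 + 8 * β - 4 * α - 3 * α ^ 2) * M < 16 * β := by
    rcases le_total (2 / α) (4 / (3 - α - β)) with h | h
    · refine ⟨_, h, le_rfl, ?_, ?_, ?_, ?_⟩
      · rw [div_lt_iff₀ hD]; linarith
      · rw [div_lt_div_iff₀ hD (by linarith)]; linarith
      · rw [← mul_div_assoc, div_lt_iff₀ hD]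
        have h1 : β * (β + α - 1) < α / 2 * (3 * α / 2 - 1) :=
          mul_lt_mul'' hb2 (by linarith) (by linarith) (by linarith)
        have h2 := mul_lt_mul_of_pos_left h1 (show 0 < 2 - α by linarith)
        have h3 : (3 * α - 2) * (α * (2 - α)) < (3 * α - 2) * 4 :=
          mul_lt_mul_of_pos_left (by nlinarith) (by linarith)
        nlinarith
      · rw [← mul_div_assoc, div_lt_iff₀ hD]
        have h1 : β * (β + α - 1) < α / 2 * (3 * α / 2 - 1) :=
          mul_lt_mul'' hb2 (by linarith) (by linarith) (by linarith)
        nlinarith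
    · have h0 : 0 < α := by linarith
      refine ⟨_, le_rfl, h, ?_, ?_, ?_, ?_⟩
      · rw [div_lt_iff₀ h0]; linarith
      · rw [div_lt_div_iff₀ h0 (by linarith)]; linarith
      · rw [← mul_div_assoc, div_lt_iff₀ h0]
        have h2 := mul_lt_mul_of_pos_left hb3 (show 0 < 2 - α by linarith)
        have h3 : (3 * α - 2) * (4 - α ^ 2) < (3 * α - 2) * 4 :=
          mul_lt_mul_of_pos_left (by nlinarith) (by linarith)
        nlinarith
      · rw [← mul_div_assoc, div_lt_iff₀ h0]
        nlinarith
  obtain ⟨M, h1, h2, h3, h4, h5, h6⟩ := key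
  have e3 := (continuous_id.tendsto M).eventually_lt_const h3
  have e4 := (continuous_id.tendsto M).eventually_lt_const h4
  have e5 := ((continuous_const_mul (2 * (2 - α) * β - 3 * α + 2)).tendsto M).eventually_lt_const h5
  have e6 := ((continuous_const_mul
    (4 + 8 * β - 4 * α - 3 * α ^ 2)).tendsto M).eventually_lt_const h6
  have e := ((e3.and (e4.and (e5.and e6))).filter_mono
    (nhdsWithin_le_nhds (s := Set.Ioi M))).and self_mem_nhdsWithin
  obtain ⟨m, ⟨g3, g4, g5, g6⟩, hm⟩ := e.exists
  have hm' : M < m := hm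
  exact ⟨m, lt_of_le_of_lt h1 hm', lt_of_le_of_lt h2 hm', lt_min g3 g4, g5, g6⟩
end

section
/- Let α, β, m be real numbers with 2/3 < α < 1, 1−α < β < α/2, and m satisfying condition (C_m). Then max{β, ((1+β−α)m − (2(2−α)−(1−α)m)β)/m, (2(1+β−α) + α(1−α) − (8/m − 2)β)/(2+α)} < min{1+β−α, α/2, 3−α−4/m}; in particular the interval of admissible η is nonempty. -/
/-- the interval of admissible `η` is nonempty. -/
theorem admissible_eta_interval_nonempty (α β m : ℝ)
    (hα0 : 2 / 3 < α) (hα1 : α < 1) (hβ0 : 1 - α < β) (hβ1 : β < α / 2)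
    (hm : CondM α β m) :
    max (max β
        (((1 + β - α) * m - (2 * (2 - α) - (1 - α) * m) * β) / m))
        ((2 * (1 + β - α) + α * (1 - α) - (8 / m - 2) * β) / (2 + α))
      < min (min (1 + β - α) (α / 2)) (3 - α - 4 / m) := by
  obtain ⟨h1, h2, h3, h4⟩ := hm
  have hd : 0 < 3 - α - β := by linarith
  have hm0 : 0 < m := lt_trans (by positivity) h1
  have hm4 : m < 4 := lt_of_lt_of_le h2 (min_le_left _ _)
  have hβ : 0 < β := by linarith
  obtain ⟨t, ht⟩ : ∃ t, t = 4 / m := ⟨_, rfl⟩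
  have htm : t * m = 4 := by rw [ht]; field_simp
  have ht1 : 1 < t := by rw [ht, lt_div_iff₀ hm0]; linarith
  have htu : t < 3 - α - β := by
    rw [ht, div_lt_iff₀ hm0]
    rw [div_lt_iff₀ hd] at h1
    linarith
  have ht2 : t < 2 := by linarith
  have e3 : 2 * (2 - α) * β - 3 * α + 2 < (2 - α) * β * t := by
    refine lt_of_mul_lt_mul_right ?_ hm0.le
    calc _ < _ := h3
      _ = (2 - α) * β * (t * m) := by rw [htm]; ring
      _ = _ := by ring
  have e4 : 4 + 8 * β - 4 * α - 3 * α ^ 2 < 4 * β * t := by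
    refine lt_of_mul_lt_mul_right ?_ hm0.le
    calc _ < _ := h4
      _ = 4 * β * (t * m) := by rw [htm]; ring
      _ = _ := by ring
  have eL2 : ((1 + β - α) * m - (2 * (2 - α) - (1 - α) * m) * β) / m
      = (1 + β - α) - (2 - α) * β * t / 2 + (1 - α) * β := by
    rw [ht]; field_simp; ring
  have e8 : 8 / m = 2 * t := by rw [ht]; ring
  have hα2 : 0 < 2 + α := by linarith
  rw [eL2, e8, ← ht]
  have p1 : 0 < (2 - α) * β * (t - 1) :=
    mul_pos (mul_pos (by linarith) hβ) (by linarith)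
  have p2 : 0 < β * (t - 1) := mul_pos hβ (by linarith)
  have p3 : 0 < α * β := mul_pos (by linarith) hβ
  have p4 : 0 < (2 - t) * (2 - (2 - α) * β) :=
    mul_pos (by linarith) (by nlinarith)
  have p5 : 0 < (2 - t) * (2 + α - 2 * β) :=
    mul_pos (by linarith) (by linarith)
  refine max_lt (max_lt ?_ ?_) ?_ <;> refine lt_min (lt_min ?_ ?_) ?_ <;>
    (try rw [div_lt_iff₀ hα2]) <;> nlinarith
end

section
/- Let α, β, m be real numbers with 2/3 < α < 1, 1−α < β < α/2, and m satisfying condition (C_m). Let η be a real number with max{β, ((1+β−α)m − (2(2−α)−(1−α)m)β)/m, (2(1+β−α) + α(1−α) − (8/m − 2)β)/(2+α)} < η < min{1+β−α, α/2, 3−α−4/m}, and let s be a real number with max{(1+β−α−η)m/(m−(2−α)(m−2)), 2(1+β−α−η)β/(α(α+η−1) + (8/m − 2)β)} < s < β. Then max{2m/(3m−4), 2s/(2s+α+η−β−1)} < min{2, 2m/((2−α)(m−2)+m), 2/(α+η−β+s), (4(1−s)β + 2αs)/((6−α−8/m)(1−s)β + αs(1+α+η−β))}; in particular the interval of admissible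 p is nonempty. -/
/-- the interval of admissible `p` is nonempty. -/
theorem admissible_p_interval_nonempty (α β m η s : ℝ)
    (hα0 : 2 / 3 < α) (hα1 : α < 1) (hβ0 : 1 - α < β) (hβ1 : β < α / 2)
    (hm : CondM α β m)
    (hη0 : max (max β
        (((1 + β - α) * m - (2 * (2 - α) - (1 - α) * m) * β) / m))
        ((2 * (1 + β - α) + α * (1 - α) - (8 / m - 2) * β) / (2 + α)) < η)
    (hη1 : η < min (min (1 + β - α) (α / 2)) (3 - α - 4 / m))
    (hs0 : max ((1 + β - α - η) * m / (m - (2 - α) * (m - 2)))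
        (2 * (1 + β - α - η) * β / (α * (α + η - 1) + (8 / m - 2) * β)) < s)
    (hs1 : s < β) :
    max (2 * m / (3 * m - 4)) (2 * s / (2 * s + α + η - β - 1))
      < min (min 2 (2 * m / ((2 - α) * (m - 2) + m)))
          (min (2 / (α + η - β + s))
            ((4 * (1 - s) * β + 2 * α * s) /
              ((6 - α - 8 / m) * (1 - s) * β + α * s * (1 + α + η - β)))) := by
  obtain ⟨hm1, hm2, -, -⟩ := hm
  obtain ⟨hm4, -⟩ := lt_min_iff.1 hm2
  obtain ⟨h12, -⟩ := max_lt_iff.1 hη0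
  obtain ⟨hηβ, -⟩ := max_lt_iff.1 h12
  obtain ⟨h34, hη5⟩ := lt_min_iff.1 hη1
  obtain ⟨hη3, -⟩ := lt_min_iff.1 h34
  obtain ⟨hs2, hs3⟩ := max_lt_iff.1 hs0
  have hden : 0 < 3 - α - β := by linarith
  have hm2' : 2 < m := by
    have h : 2 < 4 / (3 - α - β) := by
      rw [lt_div_iff₀ hden]; linarith
    linarith
  have hm0 : 0 < m := by linarith
  obtain ⟨k, hk⟩ : ∃ k, k = 1 / m := ⟨_, rfl⟩
  have hk0 : 0 < k := by rw [hk]; positivity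
  have hmk : m = 1 / k := by rw [hk]; simp
  have hk4 : 1 / 4 < k := by
    rw [hk]; exact one_div_lt_one_div_of_lt hm0 hm4
  have hk2 : k < 1 / 2 := by
    rw [hk]; exact one_div_lt_one_div_of_lt (by norm_num) hm2'
  have e8 : 8 / m = 8 * k := by rw [hk]; ring
  have e4 : 4 / m = 4 * k := by rw [hk]; ring
  obtain ⟨D, hD⟩ : ∃ D, D = 1 + β - α - η := ⟨_, rfl⟩
  have hη : η = 1 + β - α - D := by linarith
  have hD0 : 0 < D := by linarith
  have hu : 0 < (2 - α) * (1 - 2 * k) := mul_pos (by linarith) (by linarith)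
  have hu1 : (2 - α) * (1 - 2 * k) < 1 := by
    have : 0 < (α - 2 / 3) * (1 - 2 * k) := mul_pos (by linarith) (by linarith)
    linarith
  have e1 : 2 * m / (3 * m - 4) = 2 / (3 - 4 * k) := by
    rw [div_eq_div_iff (by linarith) (by linarith), hmk]; field_simp
  have e2 : 2 * m / ((2 - α) * (m - 2) + m) = 2 / ((2 - α) * (1 - 2 * k) + 1) := by
    have : 0 < (2 - α) * (m - 2) := mul_pos (by linarith) (by linarith)
    rw [div_eq_div_iff (by linarith) (by linarith), hmk]; field_simp
  have e3 : (m - (2 - α) * (m - 2)) = m * (1 - (2 - α) * (1 - 2 * k)) := by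
    rw [hmk]; field_simp
  rw [← hD, e3, div_lt_iff₀ (mul_pos hm0 (by linarith))] at hs2
  have hs2' : D < s * (1 - (2 - α) * (1 - 2 * k)) := by
    have : D * m < (s * (1 - (2 - α) * (1 - 2 * k))) * m := by linarith
    exact lt_of_mul_lt_mul_right this hm0.le
  have hs : 0 < s := by
    exact pos_of_mul_pos_left (lt_trans hD0 hs2') (by linarith)
  have hsD : D < s := by
    have := mul_pos hs hu
    linarith
  have hβ : 0 < β := by linarith
  have hα : 0 < α := by linarith
  have hs1' : 0 < 1 - s := by linarith
  have hd8 : 0 < α * (α + η - 1) + (8 * k - 2) * β :=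
    add_pos (mul_pos hα (by linarith)) (mul_pos (by linarith) hβ)
  rw [e8, ← hD, div_lt_iff₀ hd8] at hs3
  rw [e4] at hη5
  rw [e1, e2, e8]
  have x1 : 2 * s + α + η - β - 1 = 2 * s - D := by linarith
  have x2 : α + η - β + s = 1 - D + s := by linarith
  have x3 : 1 + α + η - β = 2 - D := by linarith
  have x4 : α + η - 1 = β - D := by linarith
  rw [x4] at hs3
  rw [x1, x2, x3]
  have p0 : 0 < (1 - s) * β := mul_pos hs1' hβ
  have p1 : 0 < (6 - α - 8 * k) * (1 - s) * β + α * s * (2 - D) :=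
    add_pos (mul_pos (mul_pos (by linarith) hs1') hβ)
      (mul_pos (mul_pos hα hs) (by linarith))
  have p2 : 0 < 3 - 4 * k := by linarith
  have p3 : 0 < 2 * s - D := by linarith
  refine max_lt (lt_min (lt_min ?_ ?_) (lt_min ?_ ?_)) (lt_min (lt_min ?_ ?_) (lt_min ?_ ?_))
  · rw [div_lt_iff₀ p2]; linarith
  · rw [div_lt_div_iff₀ p2 (by linarith)]
    have : 0 < α * (1 - 2 * k) := mul_pos hα (by linarith)
    linarith
  · rw [div_lt_div_iff₀ p2 (by linarith)]; linarith
  · rw [div_lt_div_iff₀ p2 p1]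
    have h1 : 0 < s * (1 - 4 * k + D - (β - 1)) := mul_pos hs (by linarith)
    have h2 : 0 < α * ((1 - s) * β + s * (1 - 4 * k + D)) := mul_pos hα (by linarith)
    linarith
  · rw [div_lt_iff₀ p3]; linarith
  · rw [div_lt_div_iff₀ p3 (by linarith)]; linarith
  · rw [div_lt_div_iff₀ p3 (by linarith)]
    have := mul_pos hs1' (sub_pos.2 hsD)
    linarith
  · rw [div_lt_div_iff₀ p3 p1]
    have := mul_pos hs1' (sub_pos.2 hs3)
    linarith
end

section
/- Let α, β, m be real numbers with 2/3 < α < 1, 1−α < β < α/2, and m satisfying condition (C_m). Then there exist real numbers η, s, p such that: β < η < min{1+β−α, α/2}; 1+β−α−η < s < β; 1 < p < 2; 2m/(3m−4) < p; 2s/(2s+α+η−β−1) < p; p < 2m/((2−α)(m−2)+m); p < 2/(α+η−β+s); and p < (4(1−s)β + 2αs)/((6−α−8/m)(1−s)β + αs(1+α+η−β)). -/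
open Filter Topology in
/-- perturbation of a boundary point -/
theorem aux_perturb (α β x a s : ℝ) (h1 : α < a) (h2 : 1 - a < s)
    (hP1 : 0 < s * ((2 - α) * x - (1 - α)) - (1 - a))
    (hP3 : 0 < (2 * s - 1 + a) * (4 * (1 - s) * β + 2 * α * s)
      - 2 * s * ((6 - α - 4 * x) * (1 - s) * β + α * s * (1 + a))) :
    ∃ a' s' : ℝ, a' < a ∧ s' < s ∧ α < a' ∧ 1 - a' < s' ∧
      0 < s' * ((2 - α) * x - (1 - α)) - (1 - a') ∧
      0 < (2 * s' - 1 + a') * (4 * (1 - s') * β + 2 * α * s')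
      - 2 * s' * ((6 - α - 4 * x) * (1 - s') * β + α * s' * (1 + a')) := by
  have key : ∀ f : ℝ → ℝ, Continuous f → 0 < f 0 → ∀ᶠ t in 𝓝[>] (0:ℝ), 0 < f t := by
    intro f hf h0
    exact (hf.continuousAt.eventually (lt_mem_nhds h0)).filter_mono nhdsWithin_le_nhds
  have e1 := key (fun t => (a - t) - α) (by fun_prop) (by simp; linarith)
  have e2 := key (fun t => (s - t) - (1 - (a - t))) (by fun_prop) (by simp; linarith)
  have e3 := key (fun t => (s - t) * ((2 - α) * x - (1 - α)) - (1 - (a - t)))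
    (by fun_prop) (by simpa using hP1)
  have e4 := key (fun t => (2 * (s - t) - 1 + (a - t)) * (4 * (1 - (s - t)) * β + 2 * α * (s - t))
      - 2 * (s - t) * ((6 - α - 4 * x) * (1 - (s - t)) * β + α * (s - t) * (1 + (a - t))))
    (by fun_prop) (by simpa using hP3)
  have e5 : ∀ᶠ t in 𝓝[>] (0:ℝ), 0 < t := eventually_mem_nhdsWithin
  obtain ⟨t, t1, t2, t3, t4, t5⟩ := (e1.and (e2.and (e3.and (e4.and e5)))).exists
  exact ⟨a - t, s - t, by linarith, by linarith, by linarith, by linarith, t3, t4⟩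

/-- choice of `a = α + η - β` and `s` -/
theorem aux_as (α β x : ℝ)
    (hα0 : 2 / 3 < α) (hα1 : α < 1) (hβ0 : 1 - α < β) (hβ1 : β < α / 2)
    (hx0 : 1 / 2 < x) (hx1 : x < 1) (hx2 : 2 * x < 3 - α - β)
    (h3 : 2 * (2 - α) * β - 3 * α + 2 < 2 * (2 - α) * β * x)
    (h4 : 4 + 8 * β - 4 * α - 3 * α ^ 2 < 8 * β * x) :
    ∃ a s : ℝ, α < a ∧ a < 1 ∧ a < 3 * α / 2 - β ∧ 1 - a < s ∧ s < β ∧ a + s < 3 - 2 * x ∧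
      0 < s * ((2 - α) * x - (1 - α)) - (1 - a) ∧
      0 < (2 * s - 1 + a) * (4 * (1 - s) * β + 2 * α * s)
      - 2 * s * ((6 - α - 4 * x) * (1 - s) * β + α * s * (1 + a)) := by
  suffices h : ∃ a s : ℝ, α < a ∧ a ≤ 1 ∧ a ≤ 3 * α / 2 - β ∧ 1 - a < s ∧ s ≤ β ∧
      a + s ≤ 3 - 2 * x ∧
      0 < s * ((2 - α) * x - (1 - α)) - (1 - a) ∧
      0 < (2 * s - 1 + a) * (4 * (1 - s) * β + 2 * α * s)
      - 2 * s * ((6 - α - 4 * x) * (1 - s) * β + α * s * (1 + a)) by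
    obtain ⟨a, s, g1, g2, g3, g4, g5, g6, g7, g8⟩ := h
    obtain ⟨a', s', k1, k2, k3, k4, k5, k6⟩ := aux_perturb α β x a s g1 g4 g7 g8
    exact ⟨a', s', k3, by linarith, by linarith, k4, by linarith, by linarith, k5, k6⟩
  have hβ : 0 < β := by linarith
  by_cases hc : min 1 (3 * α / 2 - β) + β ≤ 3 - 2 * x
  · rcases le_total 1 (3 * α / 2 - β) with h | h
    · rw [min_eq_left h] at hc
      refine ⟨1, β, hα1, le_rfl, h, by linarith, le_rfl, hc, ?_, ?_⟩
      · have : 0 < (2 - α) * x - (1 - α) := by nlinarith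
        have := mul_pos hβ this
        linarith
      · have : 0 < 2 * β ^ 2 * (1 - β) * (4 - 6 + α + 4 * x) := by
          have : 0 < 1 - β := by linarith
          have : 0 < 4 - 6 + α + 4 * x := by linarith
          positivity
        nlinarith
    · rw [min_eq_right h] at hc
      refine ⟨3 * α / 2 - β, β, by linarith, h, le_rfl, by linarith, le_rfl, hc, ?_, ?_⟩
      · nlinarith
      · have : 0 < β * (1 - β) * (8 * β * x - (4 + 8 * β - 4 * α - 3 * α ^ 2)) := by
          have : 0 < 1 - β := by linarith
          have : 0 < 8 * β * x - (4 + 8 * β - 4 * α - 3 * α ^ 2) := by linarith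
          positivity
        linarith
  · push Not at hc
    have : max α (3 - 2 * x - β) < min 1 (3 * α / 2 - β) := by
      apply max_lt
      · apply lt_min <;> linarith
      · linarith
    obtain ⟨a, ha1, ha2⟩ := exists_between this
    obtain ⟨b1, b2⟩ := max_lt_iff.1 ha1
    obtain ⟨b3, b4⟩ := lt_min_iff.1 ha2
    obtain ⟨s, hs⟩ : ∃ s, s = 3 - 2 * x - a := ⟨_, rfl⟩
    have hxx : x = (3 - a - s) / 2 := by linarith
    have s0 : 0 < s := by linarith
    have s1 : 0 < 1 - s := by linarith
    have s2 : 0 < a + s - 1 := by linarith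
    have s3 : 0 < β - s := by linarith
    have α0 : 0 < α := by linarith
    have T := mul_pos s1 s2
    refine ⟨a, s, b1, b3.le, b4.le, by linarith, by linarith, by linarith, ?_, ?_⟩
    · have : 0 < s * α * (1 - x) := by
        have : 0 < 1 - x := by linarith
        positivity
      subst hxx
      nlinarith
    · have h1 : 0 < (1 - s) * (a + s - 1) * (4 * (1 - s) * β + 2 * α * s) := by positivity
      have h2 : 0 < 2 * s * (α * (1 - s) * (β - s)) := by positivity
      subst hxx
      nlinarith

/-- existence of admissible parameters `η`, `s`, `p`. -/
theorem exists_admissible_eta_s_p (α β m : ℝ)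
    (hα0 : 2 / 3 < α) (hα1 : α < 1) (hβ0 : 1 - α < β) (hβ1 : β < α / 2)
    (hm : CondM α β m) :
    ∃ η s p : ℝ,
      β < η ∧ η < min (1 + β - α) (α / 2) ∧
      1 + β - α - η < s ∧ s < β ∧
      1 < p ∧ p < 2 ∧
      2 * m / (3 * m - 4) < p ∧
      2 * s / (2 * s + α + η - β - 1) < p ∧
      p < 2 * m / ((2 - α) * (m - 2) + m) ∧
      p < 2 / (α + η - β + s) ∧
      p < (4 * (1 - s) * β + 2 * α * s) /
          ((6 - α - 8 / m) * (1 - s) * β + α * s * (1 + α + η - β)) := by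
  obtain ⟨c1, c2, c3, c4⟩ := hm
  obtain ⟨c2, -⟩ := lt_min_iff.1 c2
  have hd : 0 < 3 - α - β := by linarith
  rw [div_lt_iff₀ hd] at c1
  have hm2 : 2 < m := by
    by_contra h
    push Not at h
    nlinarith
  have hm0 : 0 < m := by linarith
  obtain ⟨x, hx⟩ : ∃ x, x = 2 / m := ⟨_, rfl⟩
  have hxm : x * m = 2 := by rw [hx]; field_simp
  have hx0 : 1 / 2 < x := by rw [hx, lt_div_iff₀ hm0]; linarith
  have hx1 : x < 1 := by rw [hx, div_lt_iff₀ hm0]; linarith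
  have h8 : 8 / m = 4 * x := by rw [hx]; ring
  obtain ⟨a, s, g1, g2, g3, g4, g5, g6, g7, g8⟩ := aux_as α β x hα0 hα1 hβ0 hβ1 hx0 hx1
    (by apply lt_of_mul_lt_mul_right _ hm0.le; nlinarith)
    (by apply lt_of_mul_lt_mul_right _ hm0.le
        rw [mul_assoc _ x m, hxm]; linarith)
    (by apply lt_of_mul_lt_mul_right _ hm0.le
        rw [mul_assoc _ x m, hxm]; linarith)
  have e1 : 2 * m / (3 * m - 4) = 2 / (3 - 2 * x) := by
    rw [div_eq_div_iff (by linarith) (by linarith)]; linear_combination (-4) * hxm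
  have hU1 : 0 < (2 - α) * (1 - x) + 1 := by nlinarith
  have e2 : 2 * m / ((2 - α) * (m - 2) + m) = 2 / ((2 - α) * (1 - x) + 1) := by
    rw [div_eq_div_iff (by nlinarith) hU1.ne']; linear_combination (-2) * (2 - α) * hxm
  rw [e1, e2, h8]
  have s0 : 0 < s := by linarith
  have s1 : 0 < 1 - s := by linarith
  have β0 : 0 < β := by linarith
  have α0 : 0 < α := by linarith
  have a0 : 0 < a := by linarith
  have x1 : 0 < 1 - x := by linarith
  have hW : 0 < 4 * (1 - s) * β + 2 * α * s := by positivity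
  have hN : 0 < (6 - α - 4 * x) * (1 - s) * β + α * s * (1 + a) := by
    have : 0 < 6 - α - 4 * x := by linarith
    positivity
  have hL1 : 0 < 3 - 2 * x := by linarith
  have hL2 : 0 < 2 * s + a - 1 := by linarith
  have hU2 : 0 < a + s := by linarith
  have k : max (2 / (3 - 2 * x)) (2 * s / (2 * s + a - 1)) <
      min (min 2 (2 / ((2 - α) * (1 - x) + 1))) (min (2 / (a + s))
        ((4 * (1 - s) * β + 2 * α * s) /
          ((6 - α - 4 * x) * (1 - s) * β + α * s * (1 + a)))) := by
    refine max_lt (lt_min (lt_min ?_ ?_) (lt_min ?_ ?_)) (lt_min (lt_min ?_ ?_) (lt_min ?_ ?_))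
    · rw [div_lt_iff₀ hL1]; linarith
    · rw [div_lt_div_iff₀ hL1 hU1]; nlinarith [mul_pos α0 x1]
    · rw [div_lt_div_iff₀ hL1 hU2]; linarith
    · rw [div_lt_div_iff₀ hL1 hN]
      have h1 : 0 < α * (1 - s) * (β - s) := by
        have : 0 < β - s := by linarith
        positivity
      have h2 : 0 < α * s * (3 - 2 * x - a - s) := by
        have : 0 < 3 - 2 * x - a - s := by linarith
        positivity
      linarith
    · rw [div_lt_iff₀ hL2]; linarith
    · rw [div_lt_div_iff₀ hL2 hU1]; linarith
    · rw [div_lt_div_iff₀ hL2 hU2]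
      have : 0 < (1 - s) * (a + s - 1) := mul_pos s1 (by linarith)
      linarith
    · rw [div_lt_div_iff₀ hL2 hN]; linarith
  obtain ⟨p, p1, p2⟩ := exists_between k
  obtain ⟨p3, p4⟩ := max_lt_iff.1 p1
  obtain ⟨p5, p6⟩ := lt_min_iff.1 p2
  obtain ⟨p7, p8⟩ := lt_min_iff.1 p5
  obtain ⟨p9, p10⟩ := lt_min_iff.1 p6
  have hp : 1 < 2 / (3 - 2 * x) := by rw [lt_div_iff₀ hL1]; linarith
  have r1 : 2 * s + α + (a - α + β) - β - 1 = 2 * s + a - 1 := by ring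
  have r2 : α + (a - α + β) - β + s = a + s := by ring
  have r3 : 1 + α + (a - α + β) - β = 1 + a := by ring
  refine ⟨a - α + β, s, p, by linarith, lt_min (by linarith) (by linarith), by linarith, g5,
    by linarith, p7, p3, ?_, p8, ?_, ?_⟩
  · rw [r1]; exact p4
  · rw [r2]; exact p9
  · rw [r3]; exact p10
end
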